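/- arXiv:1604.01838 — 5 statements merged into one kernel-verified Lean document; each statement's English description precedes it below -/
import Mathlib

section
/- Let N ≥ 1, let R be a finite index set, let m : R → ℤ^N and a : R → ℚ, and let D = {x ∈ ℝ^N : ∀ r ∈ R, ∑_{i=1}^N m(r)_i · x_i ≤ a(r)} be nonempty. Let I ⊆ {1, …, N} be nonempty and let J = {1, …, N} \ I, with π : ℝ^N → ℝ^J the coordinate projection. Then the following are equivalent: (i) there exists a sequence (x_k) of points of D such that x_{k,i} → −∞ for every i ∈ I and x_{k,j} converges for every j ∈ J; (ii) there exists v ∈ ℝ^N with v_j = 0 for every j ∈ J, v_i < 0 for every i ∈ I, and ∑_i m(r)_i · v_i ≤ 0 for every r ∈ R. Moreover, if these conditions hold, then the set of all limits lim_k π(x_k), over all sequences (x_k) as in (i), equals the image π(D), and the dimension of the affine span of π(D) is at most (dimension of the affine span of D) − 1. -/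
/-!
Solvability of a finite system of linear inequalities survives passage to the limit in the
right-hand sides: the solvable right-hand sides form the upper closure of a subspace `S` of `ι → 𝕜`,
and Fourier–Motzkin elimination along a nonzero `w ∈ S` is a linear map killing `w`. The upper
closure of `S` is the preimage of that of the image of `S`, whose dimension is smaller, so it is
closed by induction.

Applied to the inequalities of `D` together with the equations prescribing `π`, this shows that
limits of `π (x k)` lie in `π '' D`. Applied to `s k • x k`, where `s k → 0` slowly enough that the
`I`-coordinates stay below `-1`, it yields the recession vector `v`. Conversely, every `x ∈ D` gives
the sequence `x + k • v`. The projection kills the nonzero vector `v`, a difference of two points of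
`D`, hence the dimension drops.
-/

open Filter Topology Module

section Dimension

variable {K V W : Type*} [DivisionRing K] [AddCommGroup V] [Module K V] [AddCommGroup W]
  [Module K W]

theorem finrank_map_lt_of_map_eq_zero (f : V →ₗ[K] W) {S : Submodule K V} [Module.Finite K S]
    {v : V} (hvS : v ∈ S) (hv : v ≠ 0) (hfv : f v = 0) :
    finrank K (S.map f) < finrank K S := by
  have hker : 0 < finrank K (f.domRestrict S).ker :=
    finrank_pos_iff_exists_ne_zero.2
      ⟨⟨⟨v, hvS⟩, hfv⟩, fun h => hv (congrArg (fun y => y.1.1) h)⟩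
  rw [← LinearMap.range_domRestrict, ← (f.domRestrict S).finrank_range_add_finrank_ker]
  exact Nat.lt_add_of_pos_right hker

theorem finrank_direction_affineSpan_image_lt (f : V →ₗ[K] W) {s : Set V}
    [Module.Finite K (affineSpan K s).direction] {x v : V} (hx : x ∈ s) (hxv : x + v ∈ s)
    (hv : v ≠ 0) (hfv : f v = 0) :
    finrank K (affineSpan K (f '' s)).direction < finrank K (affineSpan K s).direction := by
  have hdirection : (affineSpan K (f '' s)).direction = (affineSpan K s).direction.map f := by
    simpa [AffineSubspace.map_span] using (affineSpan K s).map_direction f.toAffineMap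
  have hmem : v ∈ (affineSpan K s).direction := by
    simpa using AffineSubspace.vsub_mem_direction
      (subset_affineSpan K s hxv) (subset_affineSpan K s hx)
  rw [hdirection]
  exact finrank_map_lt_of_map_eq_zero f hmem hv hfv

end Dimension

section LinearInequalities

variable {𝕜 ι : Type*} [Field 𝕜] [LinearOrder 𝕜]

/-- Fourier–Motzkin elimination of the unknown `t` from the system `t • w ≤ b`: the linear map
sending `b` to the entries `b i` for `w i = 0` and `w i * b j - w j * b i` for `w j < 0 < w i`,
whose nonnegativity is equivalent to solvability. -/
def fourierMotzkin (w : ι → 𝕜) :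
    (ι → 𝕜) →ₗ[𝕜] ({i // w i = 0} ⊕ {p : ι × ι // 0 < w p.1 ∧ w p.2 < 0} → 𝕜) :=
  LinearMap.pi <| Sum.elim (fun i => LinearMap.proj i.1) fun p =>
    w p.1.1 • LinearMap.proj p.1.2 - w p.1.2 • LinearMap.proj p.1.1

theorem fourierMotzkin_nonneg_iff {w b : ι → 𝕜} :
    0 ≤ fourierMotzkin w b ↔ (∀ i, w i = 0 → 0 ≤ b i) ∧
      ∀ i j, 0 < w i → w j < 0 → 0 ≤ w i * b j - w j * b i := by
  simp [fourierMotzkin, Pi.le_def]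

theorem fourierMotzkin_self (w : ι → 𝕜) : fourierMotzkin w w = 0 := by
  ext (⟨_, hi⟩ | p)
  · exact hi
  · simp [fourierMotzkin, mul_comm]

variable [IsStrictOrderedRing 𝕜] [Finite ι]

theorem exists_smul_le_iff_fourierMotzkin_nonneg {w b : ι → 𝕜} :
    (∃ t : 𝕜, t • w ≤ b) ↔ 0 ≤ fourierMotzkin w b := by
  rw [fourierMotzkin_nonneg_iff]
  simp only [Pi.le_def, Pi.smul_apply, smul_eq_mul]
  constructor
  · rintro ⟨t, ht⟩
    refine ⟨fun i hi => by simpa [hi] using ht i, fun i j hi hj => ?_⟩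
    linarith [mul_le_mul_of_nonneg_left (ht j) hi.le, mul_le_mul_of_nonpos_left (ht i) hj.le]
  · rintro ⟨hzero, hpair⟩
    suffices h : ∃ t, (∀ i, 0 < w i → t ≤ b i / w i) ∧ ∀ j, w j < 0 → b j / w j ≤ t by
      obtain ⟨t, hupper, hlower⟩ := h
      refine ⟨t, fun i => ?_⟩
      rcases lt_trichotomy (w i) 0 with hi | hi | hi
      · exact (div_le_iff_of_neg hi).1 (hlower i hi)
      · simpa [hi] using hzero i hi
      · exact (le_div_iff₀ hi).1 (hupper i hi)
    by_cases hneg : {j | w j < 0}.Nonempty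
    · obtain ⟨j, hj, hmax⟩ :=
        Set.exists_max_image {j | w j < 0} (fun j => b j / w j) (Set.toFinite _) hneg
      refine ⟨b j / w j, fun i hi => ?_, hmax⟩
      rw [div_le_iff_of_neg hj, div_mul_eq_mul_div, div_le_iff₀ hi]
      linarith [hpair i j hi hj]
    · obtain ⟨t, ht⟩ := (Set.finite_range fun i => b i / w i).bddBelow
      exact ⟨t, fun i _ => ht ⟨i, rfl⟩, fun j hj => absurd ⟨j, hj⟩ hneg⟩

theorem upperClosure_eq_preimage_fourierMotzkin {S : Submodule 𝕜 (ι → 𝕜)} {w : ι → 𝕜}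
    (hw : w ∈ S) :
    (upperClosure (S : Set (ι → 𝕜)) : Set (ι → 𝕜)) =
      fourierMotzkin w ⁻¹' (upperClosure (fourierMotzkin w '' S) : Set _) := by
  ext b
  simp only [SetLike.mem_coe, mem_upperClosure, Set.mem_preimage, Set.exists_mem_image]
  calc (∃ s ∈ S, s ≤ b) ↔ ∃ s ∈ S, ∃ t : 𝕜, t • w ≤ b - s := by
        constructor
        · rintro ⟨s, hs, hsb⟩
          exact ⟨s, hs, 0, by simpa using hsb⟩
        · rintro ⟨s, hs, t, ht⟩
          exact ⟨t • w + s, S.add_mem (S.smul_mem t hw) hs, le_sub_iff_add_le.1 ht⟩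
    _ ↔ ∃ s ∈ S, fourierMotzkin w s ≤ fourierMotzkin w b := by
        simp only [exists_smul_le_iff_fourierMotzkin_nonneg, map_sub, sub_nonneg]

variable [TopologicalSpace 𝕜] [OrderTopology 𝕜]

theorem isClosed_upperClosure_submodule (S : Submodule 𝕜 (ι → 𝕜)) :
    IsClosed (upperClosure (S : Set (ι → 𝕜)) : Set (ι → 𝕜)) := by
  induction hn : finrank 𝕜 S using Nat.strong_induction_on generalizing ι with
  | _ n ih =>
    rcases eq_or_ne S ⊥ with rfl | hS
    · simp [isClosed_Ici]
    · obtain ⟨w, hw, hw0⟩ := S.exists_mem_ne_zero_of_ne_bot hS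
      have hlt := finrank_map_lt_of_map_eq_zero (fourierMotzkin w) hw hw0 (fourierMotzkin_self w)
      have hclosed := ih _ (hn ▸ hlt) (S.map (fourierMotzkin w)) rfl
      rw [upperClosure_eq_preimage_fourierMotzkin hw, ← Submodule.map_coe]
      exact hclosed.preimage (fourierMotzkin w).continuous_on_pi

theorem exists_tendsto_zero_forall_mul_le_neg_one {α : Type*} {l : Filter α} {u : ι → α → 𝕜}
    (hu : ∀ i, Tendsto (u i) l atBot) :
    ∃ s : α → 𝕜, Tendsto s l (𝓝 0) ∧ ∀ᶠ k in l, 0 ≤ s k ∧ ∀ i, s k * u i k ≤ -1 := by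
  have := Fintype.ofFinite ι
  refine ⟨fun k => ∑ i, -(u i k)⁻¹, ?_, ?_⟩
  · simpa using tendsto_finsetSum Finset.univ fun i _ => (tendsto_inv_atBot_zero.comp (hu i)).neg
  · filter_upwards [eventually_all.2 fun i => (hu i).eventually_lt_atBot 0] with k hk
    have hnonneg (i : ι) : 0 ≤ -(u i k)⁻¹ := (neg_pos.2 (inv_lt_zero.2 (hk i))).le
    refine ⟨Finset.sum_nonneg fun i _ => hnonneg i, fun i => ?_⟩
    calc (∑ j, -(u j k)⁻¹) * u i k ≤ -(u i k)⁻¹ * u i k :=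
          mul_le_mul_of_nonpos_right
            (Finset.single_le_sum (fun j _ => hnonneg j) (Finset.mem_univ i)) (hk i).le
      _ = -1 := by rw [neg_mul, inv_mul_cancel₀ (hk i).ne]

end LinearInequalities

section Polyhedron

variable {𝕜 V ι κ σ : Type*} [Field 𝕜] [LinearOrder 𝕜] [AddCommGroup V] [Module 𝕜 V]

/-- The solution set of the linear inequalities `f i x ≤ b i`, a polyhedron when `ι` is finite. Its
recession cone, when it is nonempty, is `polyhedron f 0`. -/
def polyhedron (f : ι → Dual 𝕜 V) (b : ι → 𝕜) : Set V :=
  {x | ∀ i, f i x ≤ b i}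

variable [IsStrictOrderedRing 𝕜] {f : ι → Dual 𝕜 V} {b : ι → 𝕜} {h : σ → Dual 𝕜 V}
  {π : V →ₗ[𝕜] κ → 𝕜}

theorem add_smul_mem_polyhedron {x v : V} {t : 𝕜} (hx : x ∈ polyhedron f b)
    (hv : v ∈ polyhedron f 0) (ht : 0 ≤ t) : x + t • v ∈ polyhedron f b := fun i => by
  rw [map_add, map_smul]
  exact add_le_of_le_of_nonpos (hx i) (mul_nonpos_of_nonneg_of_nonpos ht (hv i))

variable [TopologicalSpace 𝕜] [OrderTopology 𝕜]

section Limits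

variable [Finite ι] {α : Type*} {l : Filter α} [l.NeBot] {x : α → V}

theorem nonempty_polyhedron_of_tendsto {c : α → ι → 𝕜}
    (hx : ∀ᶠ k in l, x k ∈ polyhedron f (c k)) (hc : Tendsto c l (𝓝 b)) :
    (polyhedron f b).Nonempty := by
  have hmem : b ∈ upperClosure ((LinearMap.pi f).range : Set (ι → 𝕜)) :=
    (isClosed_upperClosure_submodule _).mem_of_tendsto hc <|
      hx.mono fun k hk => mem_upperClosure.2 ⟨_, ⟨x k, rfl⟩, hk⟩
  obtain ⟨_, ⟨y, rfl⟩, hy⟩ := mem_upperClosure.1 hmem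
  exact ⟨y, hy⟩

theorem exists_mem_polyhedron_map_eq_of_tendsto [Finite κ] {c : α → ι → 𝕜} {L : κ → 𝕜}
    (hx : ∀ᶠ k in l, x k ∈ polyhedron f (c k)) (hc : Tendsto c l (𝓝 b))
    (hL : Tendsto (fun k => π (x k)) l (𝓝 L)) :
    ∃ y ∈ polyhedron f b, π y = L := by
  let g (j : κ) : Dual 𝕜 V := LinearMap.proj j ∘ₗ π
  have hmem (y : V) (c : ι → 𝕜) (z : κ → 𝕜) :
      y ∈ polyhedron (Sum.elim f (Sum.elim g (-g))) (Sum.elim c (Sum.elim z (-z))) ↔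
        y ∈ polyhedron f c ∧ π y = z := by
    simp [polyhedron, g, Sum.forall, le_antisymm_iff, Pi.le_def]
  have hlim : Tendsto (fun k => Sum.elim (c k) (Sum.elim (π (x k)) (-π (x k)))) l
      (𝓝 (Sum.elim b (Sum.elim L (-L)))) :=
    tendsto_pi_nhds.2 <| Sum.forall.2 ⟨tendsto_pi_nhds.1 hc,
      Sum.forall.2 ⟨tendsto_pi_nhds.1 hL, tendsto_pi_nhds.1 hL.neg⟩⟩
  obtain ⟨y, hy⟩ := nonempty_polyhedron_of_tendsto
    (hx.mono fun k hk => (hmem _ _ _).2 ⟨hk, rfl⟩) hlim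
  exact ⟨y, (hmem _ _ _).1 hy⟩

theorem exists_recession_of_tendsto [Finite κ] [Finite σ] {L : κ → 𝕜}
    (hx : ∀ᶠ k in l, x k ∈ polyhedron f b) (hbot : ∀ i, Tendsto (fun k => h i (x k)) l atBot)
    (hL : Tendsto (fun k => π (x k)) l (𝓝 L)) :
    ∃ v ∈ polyhedron f 0, (∀ i, h i v < 0) ∧ π v = 0 := by
  obtain ⟨s, hs, hsmul⟩ := exists_tendsto_zero_forall_mul_le_neg_one hbot
  have hmem : ∀ᶠ k in l, s k • x k ∈ polyhedron (Sum.elim f h) (Sum.elim (s k • b) (-1)) := by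
    filter_upwards [hx, hsmul] with k hxk ⟨hsk, hhk⟩
    simpa [polyhedron, Sum.forall] using ⟨fun i => mul_le_mul_of_nonneg_left (hxk i) hsk, hhk⟩
  have hlim : Tendsto (fun k => Sum.elim (s k • b) (-1 : σ → 𝕜)) l (𝓝 (Sum.elim 0 (-1))) := by
    refine tendsto_pi_nhds.2 (Sum.forall.2 ⟨fun i => ?_, fun i => tendsto_const_nhds⟩)
    simpa using hs.mul_const (b i)
  have hmap : Tendsto (fun k => π (s k • x k)) l (𝓝 0) := by
    simpa using hs.smul hL
  obtain ⟨v, hv, hπv⟩ := exists_mem_polyhedron_map_eq_of_tendsto hmem hlim hmap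
  exact ⟨v, fun i => hv (.inl i), fun i => (hv (.inr i)).trans_lt neg_one_lt_zero, hπv⟩

end Limits

section Sequences

variable [Archimedean 𝕜]

theorem exists_seq_tendsto_of_recession {x v : V} (hx : x ∈ polyhedron f b)
    (hv : v ∈ polyhedron f 0) (hhv : ∀ i, h i v < 0) (hπv : π v = 0) :
    ∃ y : ℕ → V, (∀ k, y k ∈ polyhedron f b) ∧
      (∀ i, Tendsto (fun k => h i (y k)) atTop atBot) ∧
        Tendsto (fun k => π (y k)) atTop (𝓝 (π x)) := by
  refine ⟨fun k => x + (k : 𝕜) • v, fun k => add_smul_mem_polyhedron hx hv k.cast_nonneg,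
    fun i => ?_, by simp [hπv]⟩
  simpa using tendsto_atBot_add_const_left atTop (h i x)
    (tendsto_natCast_atTop_atTop.atTop_mul_const_of_neg (hhv i))

variable [Finite ι] [Finite κ]

theorem exists_seq_tendsto_iff_exists_recession [Finite σ] (hne : (polyhedron f b).Nonempty) :
    (∃ x : ℕ → V, (∀ k, x k ∈ polyhedron f b) ∧
      (∀ i, Tendsto (fun k => h i (x k)) atTop atBot) ∧
        ∃ L, Tendsto (fun k => π (x k)) atTop (𝓝 L)) ↔
      ∃ v ∈ polyhedron f 0, (∀ i, h i v < 0) ∧ π v = 0 := by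
  constructor
  · rintro ⟨x, hx, hbot, L, hL⟩
    exact exists_recession_of_tendsto (.of_forall hx) hbot hL
  · rintro ⟨v, hv, hhv, hπv⟩
    obtain ⟨x, hx⟩ := hne
    obtain ⟨y, hy, hbot, hlim⟩ := exists_seq_tendsto_of_recession hx hv hhv hπv
    exact ⟨y, hy, hbot, _, hlim⟩

theorem setOf_exists_seq_tendsto_eq_image {v : V} (hv : v ∈ polyhedron f 0)
    (hhv : ∀ i, h i v < 0) (hπv : π v = 0) :
    {L | ∃ x : ℕ → V, (∀ k, x k ∈ polyhedron f b) ∧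
      (∀ i, Tendsto (fun k => h i (x k)) atTop atBot) ∧
        Tendsto (fun k => π (x k)) atTop (𝓝 L)} = π '' polyhedron f b := by
  refine Set.Subset.antisymm ?_ ?_
  · rintro L ⟨x, hx, -, hL⟩
    exact exists_mem_polyhedron_map_eq_of_tendsto (.of_forall hx) tendsto_const_nhds hL
  · rintro _ ⟨x, hx, rfl⟩
    exact exists_seq_tendsto_of_recession hx hv hhv hπv

end Sequences

end Polyhedron

theorem stmt_2_general {𝕜 ρ κ : Type*} [Field 𝕜] [LinearOrder 𝕜] [IsStrictOrderedRing 𝕜]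
    [Archimedean 𝕜] [TopologicalSpace 𝕜] [OrderTopology 𝕜] [Fintype κ] (R : Finset ρ)
    (m : ρ → κ → 𝕜) (a : ρ → 𝕜) (D : Set (κ → 𝕜))
    (hD : D = {x | ∀ r ∈ R, ∑ i, m r i * x i ≤ a r}) (hne : D.Nonempty)
    (I : Set κ) (hI : I.Nonempty) (π : (κ → 𝕜) → ({j : κ // j ∉ I} → 𝕜))
    (hπ : π = fun x j => x j.val) :
    ((∃ x : ℕ → κ → 𝕜, (∀ k, x k ∈ D) ∧ (∀ i ∈ I, Tendsto (fun k => x k i) atTop atBot) ∧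
        ∃ L, Tendsto (fun k => π (x k)) atTop (𝓝 L)) ↔
      ∃ v : κ → 𝕜, (∀ j, j ∉ I → v j = 0) ∧ (∀ i ∈ I, v i < 0) ∧
        ∀ r ∈ R, ∑ i, m r i * v i ≤ 0) ∧
    ((∃ v : κ → 𝕜, (∀ j, j ∉ I → v j = 0) ∧ (∀ i ∈ I, v i < 0) ∧
        ∀ r ∈ R, ∑ i, m r i * v i ≤ 0) →
      {L | ∃ x : ℕ → κ → 𝕜, (∀ k, x k ∈ D) ∧
          (∀ i ∈ I, Tendsto (fun k => x k i) atTop atBot) ∧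
          Tendsto (fun k => π (x k)) atTop (𝓝 L)} = π '' D ∧
        finrank 𝕜 (affineSpan 𝕜 (π '' D)).direction + 1 ≤
          finrank 𝕜 (affineSpan 𝕜 D).direction) := by
  let f (r : R) : Dual 𝕜 (κ → 𝕜) := dotProductBilin 𝕜 𝕜 (m r)
  let h (i : I) : Dual 𝕜 (κ → 𝕜) := LinearMap.proj i.1
  let p : (κ → 𝕜) →ₗ[𝕜] ({j // j ∉ I} → 𝕜) := LinearMap.funLeft 𝕜 𝕜 Subtype.val
  obtain rfl : π = p := hπ
  obtain rfl : D = polyhedron f fun r => a r := by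
    simp only [polyhedron, Subtype.forall]
    exact hD
  have hrecession : (∃ v : κ → 𝕜, (∀ j, j ∉ I → v j = 0) ∧ (∀ i ∈ I, v i < 0) ∧
      ∀ r ∈ R, ∑ i, m r i * v i ≤ 0) ↔ ∃ v ∈ polyhedron f 0, (∀ i, h i v < 0) ∧ p v = 0 := by
    refine exists_congr fun v => ?_
    simp only [polyhedron, funext_iff, Subtype.forall, Set.mem_ofPred_eq]
    tauto
  have hbot (x : ℕ → κ → 𝕜) : (∀ i ∈ I, Tendsto (fun k => x k i) atTop atBot) ↔
      ∀ i, Tendsto (fun k => h i (x k)) atTop atBot :=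
    ⟨fun hI i => hI i i.2, fun hI i hi => hI ⟨i, hi⟩⟩
  simp only [hrecession, hbot]
  refine ⟨exists_seq_tendsto_iff_exists_recession hne, ?_⟩
  rintro ⟨v, hv, hhv, hpv⟩
  refine ⟨setOf_exists_seq_tendsto_eq_image hv hhv hpv, ?_⟩
  obtain ⟨x, hx⟩ := hne
  obtain ⟨i, hi⟩ := hI
  have hxv : x + v ∈ polyhedron f fun r => a r := by
    simpa using add_smul_mem_polyhedron hx hv zero_le_one
  exact finrank_direction_affineSpan_image_lt p hx hxv
    (fun hv0 => (hhv ⟨i, hi⟩).ne (congrFun hv0 i)) hpv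

/-- For a nonempty polyhedral domain
`D = {x ∈ ℝ^N : ∀ r ∈ R, ∑ i, m r i * x i ≤ a r}` with rational slopes, a nonempty set `I`
of coordinates, and `π` the projection to the coordinates outside `I`:
(i) the existence of a sequence in `D` whose `I`-coordinates tend to `-∞` and whose other
coordinates converge is equivalent to (ii) the existence of a recession vector `v` of `D`
supported on `I` with all `I`-coordinates negative; moreover in that case the set of all
limits of such projected sequences equals `π '' D`, whose affine span has dimension at most
`dim (affine span of D) - 1`. -/
theorem stmt_2 {ρ : Type*} (N : ℕ) (hN : 1 ≤ N) (R : Finset ρ)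
    (m : ρ → Fin N → ℤ) (a : ρ → ℚ)
    (D : Set (Fin N → ℝ))
    (hD : D = {x | ∀ r ∈ R, ∑ i, (m r i : ℝ) * x i ≤ (a r : ℝ)})
    (hne : D.Nonempty)
    (I : Set (Fin N)) (hI : I.Nonempty)
    (π : (Fin N → ℝ) → ({ j : Fin N // j ∉ I } → ℝ))
    (hπ : π = fun x j => x j.val) :
    ((∃ x : ℕ → Fin N → ℝ, (∀ k, x k ∈ D) ∧
        (∀ i ∈ I, Filter.Tendsto (fun k => x k i) Filter.atTop Filter.atBot) ∧
        (∃ L, Filter.Tendsto (fun k => π (x k)) Filter.atTop (nhds L))) ↔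
      (∃ v : Fin N → ℝ, (∀ j, j ∉ I → v j = 0) ∧ (∀ i ∈ I, v i < 0) ∧
        ∀ r ∈ R, ∑ i, (m r i : ℝ) * v i ≤ 0)) ∧
    ((∃ v : Fin N → ℝ, (∀ j, j ∉ I → v j = 0) ∧ (∀ i ∈ I, v i < 0) ∧
        ∀ r ∈ R, ∑ i, (m r i : ℝ) * v i ≤ 0) →
      ({L | ∃ x : ℕ → Fin N → ℝ, (∀ k, x k ∈ D) ∧
          (∀ i ∈ I, Filter.Tendsto (fun k => x k i) Filter.atTop Filter.atBot) ∧
          Filter.Tendsto (fun k => π (x k)) Filter.atTop (nhds L)} = π '' D ∧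
        Module.finrank ℝ (affineSpan ℝ (π '' D)).direction + 1 ≤
          Module.finrank ℝ (affineSpan ℝ D).direction)) :=
  stmt_2_general R (fun r i => (m r i : ℝ)) (fun r => (a r : ℝ)) D hD hne I hI π hπ
end

section
/- Let 0 ≤ n < N be integers and let e_1, …, e_N be the standard basis of the free ℤ-module ℤ^N; set e_0 = 0. For every function h : {n+1, …, N} → {0, 1, …, n}, form the exterior product w_h = (e_{n+1} + e_{h(n+1)}) ∧ (e_{n+2} + e_{h(n+2)}) ∧ ⋯ ∧ (e_N + e_{h(N)}) in the (N−n)-th exterior power Λ^{N−n}(ℤ^N). Then the collection of all (n+1)^{N−n} elements w_h generates Λ^{N−n}(ℤ^N) as a ℤ-module. -/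
/-!
Suppose that vectors `x i`, one for each slot of an alternating map `f`, together with vectors
`y k`, one of which is zero, span `M`. The values of `f` are combinations of its values at tuples
of these generators. Such a tuple may be taken injective, as `f` vanishes otherwise, and then its
entries of the form `x i` can be permuted into their own slots `i`. The tuple now has `x i` or
some `y k` in each slot `i`, and both lie in the span of the vectors `x i + y k`: since some `y k`
is zero, `x i` is one of these vectors, and `y k = (x i + y k) - x i`. Expanding multilinearly
expresses the value of `f` through the values at the tuples `i ↦ x i + y (h i)`.
-/

open Function Set Submodule

theorem multilinearMap_apply_mem_span_range {R ι P : Type*} {M α : ι → Type*} [CommSemiring R]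
    [Finite ι] [∀ i, AddCommMonoid (M i)] [∀ i, Module R (M i)] [AddCommMonoid P] [Module R P]
    (f : MultilinearMap R M P) (g : ∀ i, α i → M i) {v : ∀ i, M i}
    (hv : ∀ i, v i ∈ span R (range (g i))) :
    f v ∈ span R (range fun h : ∀ i, α i ↦ f fun i ↦ g i (h i)) := by
  classical
  cases nonempty_fintype ι
  choose c hc using fun i ↦ Finsupp.mem_span_range_iff_exists_finsupp.1 (hv i)
  obtain rfl : (fun i ↦ ∑ a ∈ (c i).support, c i a • g i a) = v := funext hc
  rw [f.map_sum_finset]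
  refine sum_mem fun h _ ↦ ?_
  rw [f.map_smul_univ]
  exact smul_mem _ _ (subset_span ⟨h, rfl⟩)

theorem exists_perm_apply_eq_of_injective_sum {ι κ : Type*} [Finite ι] {a : ι → ι ⊕ κ}
    (ha : Injective a) : ∃ σ : Equiv.Perm ι, ∀ i j, a i = Sum.inl j → σ j = i := by
  let slots := {p : ι × ι // a p.1 = Sum.inl p.2}
  have fst_injective : Injective fun p : slots ↦ p.1.1 := fun p q (h : p.1.1 = q.1.1) ↦
    Subtype.ext (Prod.ext h (Sum.inl_injective (by rw [← p.2, ← q.2, h])))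
  have snd_injective : Injective fun p : slots ↦ p.1.2 := fun p q (h : p.1.2 = q.1.2) ↦
    Subtype.ext (Prod.ext (ha (by rw [p.2, q.2, h])) h)
  obtain ⟨σ, hσ⟩ := Equiv.Perm.exists_extending_pair _ _ snd_injective fst_injective
  exact ⟨σ, fun i j h ↦ hσ ⟨(i, j), h⟩⟩

theorem range_succ_subset_range_tail_union_range_head {α : Type*} {N : ℕ} (n : ℕ) (e : ℕ → α) :
    (range fun k : Fin N ↦ e (k + 1)) ⊆
      (range fun j : Fin (N - n) ↦ e (n + 1 + j)) ∪ range fun k : Fin (n + 1) ↦ e k := by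
  rintro _ ⟨k, rfl⟩
  rcases lt_or_ge (k : ℕ) n with hk | hk
  · exact .inr ⟨⟨k + 1, by omega⟩, rfl⟩
  · exact .inl ⟨⟨k - n, by omega⟩, congrArg e (by grind)⟩

theorem insert_range_subset_span_range_const_add {R M κ : Type*} [Ring R] [AddCommGroup M]
    [Module R M] {y : κ → M} (hy : 0 ∈ range y) (x : M) :
    insert x (range y) ⊆ span R (range fun k ↦ x + y k) := by
  have hx : x ∈ span R (range fun k ↦ x + y k) := by
    obtain ⟨k, hk⟩ := hy
    exact subset_span ⟨k, by simp [hk]⟩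
  rintro _ (rfl | ⟨k, rfl⟩)
  · exact hx
  · rw [← add_sub_cancel_left x (y k)]
    exact sub_mem (subset_span ⟨k, rfl⟩) hx

section AlternatingMap

variable {R M P ι κ : Type*} [CommRing R] [AddCommGroup M] [Module R M] [AddCommGroup P]
  [Module R P] [Finite ι] (f : M [⋀^ι]→ₗ[R] P) (x : ι → M) {y : κ → M}

theorem alternatingMap_sumElim_comp_mem_span_range_add (hy : 0 ∈ range y) (a : ι → ι ⊕ κ) :
    f (Sum.elim x y ∘ a) ∈ span R (range fun h : ι → κ ↦ f fun i ↦ x i + y (h i)) := by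
  classical
  cases nonempty_fintype ι
  by_cases ha : Injective a
  · obtain ⟨σ, hσ⟩ := exists_perm_apply_eq_of_injective_sum ha
    have hslot : ∀ i, Sum.elim x y (a (σ i)) ∈ insert (x i) (range y) := fun i ↦ by
      rcases h : a (σ i) with j | k
      · exact .inl (congrArg x (σ.injective (hσ _ _ h)))
      · exact .inr ⟨k, rfl⟩
    have hperm : f ((Sum.elim x y ∘ a) ∘ σ) ∈
        span R (range fun h : ι → κ ↦ f fun i ↦ x i + y (h i)) :=
      multilinearMap_apply_mem_span_range f.toMultilinearMap (fun i k ↦ x i + y k)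
        fun i ↦ insert_range_subset_span_range_const_add hy _ (hslot i)
    rw [f.map_perm, Units.smul_def] at hperm
    simpa [smul_smul] using zsmul_mem hperm σ.sign
  · rw [f.map_eq_zero_of_not_injective _ fun h ↦ ha h.of_comp]
    exact zero_mem _

theorem span_range_alternatingMap_add (hy : 0 ∈ range y)
    (hxy : span R (range x ∪ range y) = ⊤) :
    span R (range fun h : ι → κ ↦ f fun i ↦ x i + y (h i)) = span R (range f) := by
  refine le_antisymm (span_mono (range_subset_iff.2 fun h ↦ mem_range_self _)) (span_le.2 ?_)
  rintro _ ⟨v, rfl⟩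
  have hv : f v ∈ span R (range fun a : ι → ι ⊕ κ ↦ f (Sum.elim x y ∘ a)) :=
    multilinearMap_apply_mem_span_range f.toMultilinearMap (fun _ ↦ Sum.elim x y) fun i ↦ by
      simp [Set.Sum.elim_range, hxy]
  refine span_le.2 ?_ hv
  rintro _ ⟨a, rfl⟩
  exact alternatingMap_sumElim_comp_mem_span_range_add f x hy a

end AlternatingMap

theorem stmt_3_general {R M κ : Type*} [CommRing R] [AddCommGroup M] [Module R M] {m : ℕ}
    (x : Fin m → M) (y : κ → M) (hy : 0 ∈ range y) (hxy : span R (range x ∪ range y) = ⊤) :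
    span R (range fun h : Fin m → κ ↦ ExteriorAlgebra.ιMulti R m fun j ↦ x j + y (h j)) =
      ⋀[R]^m M := by
  rw [span_range_alternatingMap_add _ x hy hxy, exteriorPower.ιMulti_span_fixedDegree]

/-- For `0 ≤ n < N`, the `(n+1)^(N-n)` polyvectors
`w_h = (e_{n+1} + e_{h(n+1)}) ∧ ⋯ ∧ (e_N + e_{h(N)})` (where `e_0 = 0` and
`h : {n+1,…,N} → {0,…,n}`) generate the exterior power `Λ^{N-n}(ℤ^N)` as a `ℤ`-module. -/
theorem stmt_3 (N n : ℕ) (hn : n < N)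
    (E : ℕ → Fin N → ℤ)
    (hE : E = fun (i : ℕ) (j : Fin N) => if (j : ℕ) + 1 = i then (1 : ℤ) else 0)
    (w : (Fin (N - n) → Fin (n + 1)) → ExteriorAlgebra ℤ (Fin N → ℤ))
    (hw : w = fun h => ExteriorAlgebra.ιMulti ℤ (N - n)
        (fun j => E (n + 1 + (j : ℕ)) + E ((h j : ℕ)))) :
    Submodule.span ℤ (Set.range w) = ⋀[ℤ]^(N - n) (Fin N → ℤ) := by
  have E_zero : E 0 = 0 := by ext; simp [hE]
  have E_succ : (fun k : Fin N ↦ E (k + 1)) = Pi.basisFun ℤ (Fin N) := by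
    ext k j
    simp [hE, Pi.single_apply, Fin.ext_iff]
  have E_span : span ℤ (range fun k : Fin N ↦ E (k + 1)) = ⊤ := by
    rw [E_succ, (Pi.basisFun ℤ (Fin N)).span_eq]
  rw [hw]
  exact stmt_3_general (fun j : Fin (N - n) ↦ E (n + 1 + j)) (fun k : Fin (n + 1) ↦ E k)
    ⟨0, E_zero⟩
    (eq_top_mono (span_mono (range_succ_subset_range_tail_union_range_head n E)) E_span)
end

section
/- Let 0 ≤ n ≤ N be integers, let e_1, …, e_N be the standard basis of ℤ^N, and set vol = e_1 ∧ ⋯ ∧ e_N ∈ Λ^N(ℤ^N) and ω = e_1 ∧ ⋯ ∧ e_n ∈ Λ^n(ℤ^N). Suppose K ∈ Λ^n(ℤ^N) has the following property: for every w ∈ Λ^{N−n}(ℤ^N) satisfying ω ∧ w = vol, the element K ∧ w ∈ Λ^N(ℤ^N), written as λ_w · vol, has λ_w ≥ 0. Then K = c · ω for some nonnegative integer c. -/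
/-!
If every functional taking the value `1` on a basis vector `v` is nonnegative on `x`, then `x` is a
nonnegative multiple of `v`: adding integer multiples of another coordinate to the coordinate at
`v` gives an affine function of an integer that is bounded below, so that coordinate of `x`
vanishes. This applies to `K` and `ω` because the wedge pairing represents every functional on the
`n`-th exterior power, basis elements being paired with those of the complementary sets.
-/

lemma eq_zero_of_forall_nonneg_add_zsmul {G : Type*} [AddCommGroup G] [LinearOrder G]
    [IsOrderedAddMonoid G] [Archimedean G] {a b : G} (h : ∀ k : ℤ, 0 ≤ a + k • b) : b = 0 := by
  have nonpos {c : G} (hc : ∀ k : ℕ, k • c ≤ a) : c ≤ 0 := by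
    by_contra! c_pos
    obtain ⟨k, hk⟩ := exists_lt_nsmul c_pos a
    exact (hc k).not_gt hk
  have b_nonpos : b ≤ 0 := nonpos fun k ↦ by simpa [← sub_eq_add_neg] using h (-k)
  have neg_b_nonpos : -b ≤ 0 := nonpos fun k ↦ by simpa [neg_le_iff_add_nonneg] using h k
  exact le_antisymm b_nonpos (neg_nonpos.mp neg_b_nonpos)

lemma exists_nonneg_eq_smul_basis_of_dual_nonneg {R P ι : Type*} [CommRing R] [LinearOrder R]
    [IsOrderedRing R] [Archimedean R] [AddCommGroup P] [Module R P]
    (v : Module.Basis ι R P) (i : ι) {x : P}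
    (hx : ∀ φ : Module.Dual R P, φ (v i) = 1 → 0 ≤ φ x) : ∃ c : R, 0 ≤ c ∧ x = c • v i := by
  have coord_eq_zero (j : ι) (hj : j ≠ i) : v.coord j x = 0 :=
    eq_zero_of_forall_nonneg_add_zsmul fun k ↦ by
      simpa using hx (v.coord i + k • v.coord j) (by simp [hj.symm])
  refine ⟨v.coord i x, hx _ (by simp), v.ext_elem fun j ↦ ?_⟩
  obtain rfl | hj := eq_or_ne j i
  · simp
  · simpa [hj.symm] using coord_eq_zero j hj

section WedgePairing

open Set.powersetCard

variable {R M I : Type*} [CommRing R] [AddCommGroup M] [Module R M] [LinearOrder I]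

lemma exteriorBasis_ofFinEmbEquiv_eq_ιMulti (b : Module.Basis I R M) {n : ℕ} (f : Fin n ↪o I) :
    b.ExteriorAlgebra (ofFinEmbEquiv f) = ExteriorAlgebra.ιMulti R n (b ∘ f) := by
  rw [ExteriorAlgebra.basis_apply_powersetCard, ExteriorAlgebra.ιMulti_family,
    Equiv.symm_apply_apply]

lemma exteriorBasis_univ_eq_ιMulti {N : ℕ} (b : Module.Basis (Fin N) R M) :
    b.ExteriorAlgebra Finset.univ = ExteriorAlgebra.ιMulti R N b := by
  have range_eq_univ : (ofFinEmbEquiv (OrderIso.refl (Fin N)).toOrderEmbedding).val = .univ :=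
    Finset.card_eq_iff_eq_univ _ |>.mp (by simp)
  rw [← range_eq_univ]
  exact exteriorBasis_ofFinEmbEquiv_eq_ιMulti b _

variable [Fintype I] {m n : ℕ}

lemma exists_exteriorBasis_mul_eq_ite (b : Module.Basis I R M) (hm : m + n = Fintype.card I)
    (t : Set.powersetCard I n) :
    ∃ w ∈ ⋀[R]^m M, ∀ s : Set.powersetCard I n,
      b.ExteriorAlgebra s * w = if s = t then b.ExteriorAlgebra Finset.univ else 0 := by
  have ht : Disjoint t.val (compl hm t).val := disjoint_compl_right
  have mul_compl : b.ExteriorAlgebra t * b.ExteriorAlgebra (compl hm t) =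
      (permOfDisjoint ht).sign • b.ExteriorAlgebra Finset.univ := by
    rw [ExteriorAlgebra.basis_mul_of_disjoint b t _ ht, coe_disjUnion,
      Finset.disjUnion_eq_union, coe_compl, Finset.union_compl]
  have compl_mem : b.ExteriorAlgebra (compl hm t) ∈ ⋀[R]^m M := by
    rw [ExteriorAlgebra.basis_eq_coe_basis]
    exact Subtype.property _
  refine ⟨(permOfDisjoint ht).sign • b.ExteriorAlgebra (compl hm t),
    zsmul_mem compl_mem _, fun s ↦ ?_⟩
  split_ifs with hst
  · rw [hst, mul_smul_comm, mul_compl, smul_smul, Int.units_mul_self, one_smul]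
  · have not_disjoint : ¬Disjoint s.val (compl hm t).val := fun h ↦
      hst (eq_iff_subset.mpr (disjoint_compl_right_iff.mp h))
    rw [mul_smul_comm, ExteriorAlgebra.basis_mul_of_not_disjoint b s _ not_disjoint, smul_zero]

lemma exists_mul_eq_dual_smul_exteriorBasis_univ (b : Module.Basis I R M)
    (hm : m + n = Fintype.card I) (φ : Module.Dual R (⋀[R]^n M)) :
    ∃ w ∈ ⋀[R]^m M, ∀ x : ⋀[R]^n M, (x : ExteriorAlgebra R M) * w =
      φ x • b.ExteriorAlgebra Finset.univ := by
  choose w w_mem basis_mul_w using exists_exteriorBasis_mul_eq_ite b hm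
  let W := ∑ t, φ (b.exteriorPower n t) • w t
  refine ⟨W, sum_mem fun t _ ↦ Submodule.smul_mem _ _ (w_mem t), fun x ↦ ?_⟩
  have mul_W_eq : LinearMap.mulRight R W ∘ₗ (⋀[R]^n M).subtype =
      φ.smulRight (b.ExteriorAlgebra Finset.univ) := by
    refine (b.exteriorPower n).ext fun s ↦ ?_
    change (b.exteriorPower n s : ExteriorAlgebra R M) * W = φ (b.exteriorPower n s) • _
    simp only [W, ← ExteriorAlgebra.basis_eq_coe_basis, Finset.mul_sum, mul_smul_comm, basis_mul_w,
      smul_ite, smul_zero, Finset.sum_ite_eq, Finset.mem_univ, if_true]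
  exact LinearMap.congr_fun mul_W_eq x

theorem stmt_4_general [LinearOrder R] [IsOrderedRing R] [Archimedean R]
    (b : Module.Basis I R M) (hm : m + n = Fintype.card I) (s : Set.powersetCard I n)
    {K : ExteriorAlgebra R M} (hK : K ∈ ⋀[R]^n M)
    (hpos : ∀ w ∈ ⋀[R]^m M, b.ExteriorAlgebra s * w = b.ExteriorAlgebra Finset.univ →
      ∀ r : R, K * w = r • b.ExteriorAlgebra Finset.univ → 0 ≤ r) :
    ∃ c : R, 0 ≤ c ∧ K = c • b.ExteriorAlgebra s := by
  rw [ExteriorAlgebra.basis_eq_coe_basis] at hpos ⊢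
  lift K to ⋀[R]^n M using hK
  have dual_nonneg (φ : Module.Dual R (⋀[R]^n M)) (hφ : φ (b.exteriorPower n s) = 1) :
      0 ≤ φ K := by
    obtain ⟨w, w_mem, mul_w⟩ := exists_mul_eq_dual_smul_exteriorBasis_univ b hm φ
    exact hpos w w_mem (by rw [mul_w, hφ, one_smul]) _ (mul_w K)
  obtain ⟨c, hc, rfl⟩ := exists_nonneg_eq_smul_basis_of_dual_nonneg _ s dual_nonneg
  exact ⟨c, hc, rfl⟩

end WedgePairing

/-- Let `vol = e_1 ∧ ⋯ ∧ e_N ∈ Λ^N(ℤ^N)` and `ω = e_1 ∧ ⋯ ∧ e_n ∈ Λ^n(ℤ^N)`.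
If `K ∈ Λ^n(ℤ^N)` is such that for every `w ∈ Λ^{N-n}(ℤ^N)` with `ω ∧ w = vol` the integer
`λ_w` with `K ∧ w = λ_w • vol` is nonnegative, then `K = c • ω` for some `c ∈ ℕ`. -/
theorem stmt_4 (N n : ℕ) (hn : n ≤ N)
    (e : Fin N → Fin N → ℤ) (he : e = fun i => Pi.single i 1)
    (vol ω : ExteriorAlgebra ℤ (Fin N → ℤ))
    (hvol : vol = ExteriorAlgebra.ιMulti ℤ N e)
    (hω : ω = ExteriorAlgebra.ιMulti ℤ n (fun i => e (Fin.castLE hn i)))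
    (K : ExteriorAlgebra ℤ (Fin N → ℤ)) (hK : K ∈ ⋀[ℤ]^n (Fin N → ℤ))
    (hpos : ∀ w : ExteriorAlgebra ℤ (Fin N → ℤ), w ∈ ⋀[ℤ]^(N - n) (Fin N → ℤ) →
      ω * w = vol → ∀ lam : ℤ, K * w = lam • vol → 0 ≤ lam) :
    ∃ c : ℕ, K = (c : ℤ) • ω := by
  obtain rfl : e = Pi.basisFun ℤ (Fin N) := by ext1 i; simp [he]
  obtain rfl := hvol.trans (exteriorBasis_univ_eq_ιMulti _).symm
  obtain rfl := hω.trans (exteriorBasis_ofFinEmbEquiv_eq_ιMulti _ (Fin.castLEOrderEmb hn)).symm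
  obtain ⟨c, hc, hKc⟩ := stmt_4_general _ (by simp [hn]) _ hK hpos
  lift c to ℕ using hc
  exact ⟨c, hKc⟩
end

section
/- Let A be a finite set of vectors in ℤ^N with at least two elements, let c : A → ℝ, and define F : ℝ^N → ℝ by F(x) = max_{m ∈ A}(⟨m, x⟩ + c(m)). Let V = {y ∈ ℝ^N : the maximum defining F(y) is attained by at least two distinct elements of A}. Suppose x ∈ ℝ^N is a point at which the maximum is attained by a unique element m₀ ∈ A. Then V is nonempty and there exists y ∈ V with ‖y − x‖ ≤ F(x) − max_{m ∈ A, m ≠ m₀}(⟨m, x⟩ + c(m)), where ‖·‖ is the Euclidean norm on ℝ^N. -/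
/-!
If `a j ≠ a i`, moving from `x` in the direction of the slope difference `a j - a i` by the gap
`⟪a i, x⟫ + c i - (⟪a j, x⟫ + c j)` divided by `‖a j - a i‖` makes the two monomials equal. So in
the closed ball of that radius around `x` the monomial `i`, dominant at the centre, is matched or
exceeded by another one somewhere; as the ball is connected, the intermediate value theorem gives a
point where monomial `i` equals the maximum of the others. Distinct integer slopes satisfy
`‖a j - a i‖ ≥ 1`, so the radius is at most the gap.
-/

open scoped RealInnerProductSpace

section CornerLocus

variable {ι X R : Type*} [LinearOrder R] {s : Finset ι} {f : ι → X → R} {i j : ι}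

/-- The corner locus of the pointwise maximum of a nonempty finite family of functions: the points
where at least two indices attain the maximum. For tropical monomials `f i`, it is the finite part
of the tropical hypersurface. -/
def cornerLocus (s : Finset ι) (hs : s.Nonempty) (f : ι → X → R) : Set X :=
  {x | ∃ i ∈ s, ∃ j ∈ s, i ≠ j ∧
    f i x = s.sup' hs (fun k => f k x) ∧ f j x = s.sup' hs (fun k => f k x)}

lemma mem_cornerLocus_of_eq_sup'_erase [DecidableEq ι] (hi : i ∈ s) (hne : (s.erase i).Nonempty)
    {x : X} (hx : f i x = (s.erase i).sup' hne (fun k => f k x)) :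
    x ∈ cornerLocus s ⟨i, hi⟩ f := by
  have hsup : f i x = s.sup' ⟨i, hi⟩ (fun k => f k x) := calc
    f i x = f i x ⊔ (s.erase i).sup' hne (fun k => f k x) := by rw [← hx, sup_idem]
    _ = (insert i (s.erase i)).sup' (Finset.insert_nonempty _ _) (fun k => f k x) :=
      (Finset.sup'_insert hne fun k => f k x).symm
    _ = s.sup' ⟨i, hi⟩ (fun k => f k x) :=
      Finset.sup'_congr _ (Finset.insert_erase hi) fun _ _ => rfl
  obtain ⟨j, hj, hjx⟩ := Finset.exists_mem_eq_sup' hne (fun k => f k x)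
  obtain ⟨hji, hjs⟩ := Finset.mem_erase.mp hj
  exact ⟨i, hi, j, hjs, hji.symm, hsup, hjx.symm.trans (hx.symm.trans hsup)⟩

lemma nonempty_inter_cornerLocus_of_isPreconnected [TopologicalSpace X] [TopologicalSpace R]
    [OrderClosedTopology R] {t : Set X} (ht : IsPreconnected t) (hf : ∀ k ∈ s, ContinuousOn (f k) t)
    (hi : i ∈ s) (hj : j ∈ s) (hji : j ≠ i) {x y : X} (hx : x ∈ t) (hy : y ∈ t)
    (hxi : ∀ k ∈ s, f k x ≤ f i x) (hyj : f i y ≤ f j y) :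
    (t ∩ cornerLocus s ⟨i, hi⟩ f).Nonempty := by
  classical
  have hj' : j ∈ s.erase i := Finset.mem_erase.mpr ⟨hji, hj⟩
  have hcont : ContinuousOn (fun z => (s.erase i).sup' ⟨j, hj'⟩ (fun k => f k z)) t :=
    ContinuousOn.finset_sup'_apply _ fun k hk => hf k (Finset.mem_of_mem_erase hk)
  obtain ⟨z, hzt, hz⟩ := ht.intermediate_value₂ hy hx (hf i hi) hcont
    (hyj.trans (Finset.le_sup' (fun k => f k y) hj'))
    (Finset.sup'_le _ _ fun k hk => hxi k (Finset.mem_of_mem_erase hk))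
  exact ⟨z, hzt, mem_cornerLocus_of_eq_sup'_erase hi _ hz⟩

end CornerLocus

section InnerProductSpace

variable {ι E : Type*} [NormedAddCommGroup E] [InnerProductSpace ℝ E]

lemma exists_inner_eq_and_norm_eq_div {v : E} (hv : v ≠ 0) (δ : ℝ) :
    ∃ d : E, ⟪v, d⟫ = δ ∧ ‖d‖ = |δ| / ‖v‖ := by
  have hv' : ‖v‖ ≠ 0 := norm_ne_zero_iff.mpr hv
  refine ⟨(δ / ‖v‖ ^ 2) • v, ?_, ?_⟩
  · rw [real_inner_smul_right, real_inner_self_eq_norm_sq]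
    field_simp
  · rw [norm_smul, norm_div, norm_pow, norm_norm, Real.norm_eq_abs]
    field_simp

variable {s : Finset ι} {a : ι → E} {c : ι → ℝ} {i j : ι} {x : E}

lemma exists_mem_cornerLocus_norm_sub_le_div (hi : i ∈ s) (hj : j ∈ s) (hij : a j ≠ a i)
    (hmax : ∀ k ∈ s, ⟪a k, x⟫ + c k ≤ ⟪a i, x⟫ + c i) :
    ∃ y ∈ cornerLocus s ⟨i, hi⟩ (fun k y => ⟪a k, y⟫ + c k),
      ‖y - x‖ ≤ (⟪a i, x⟫ + c i - (⟪a j, x⟫ + c j)) / ‖a j - a i‖ := by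
  set δ : ℝ := ⟪a i, x⟫ + c i - (⟪a j, x⟫ + c j)
  obtain ⟨d, hd, hnorm⟩ := exists_inner_eq_and_norm_eq_div (sub_ne_zero.mpr hij) δ
  rw [abs_of_nonneg (sub_nonneg.mpr (hmax j hj))] at hnorm
  have hmeet : ⟪a i, x + d⟫ + c i = ⟪a j, x + d⟫ + c j := by
    rw [inner_sub_left] at hd
    rw [inner_add_right, inner_add_right]
    linarith
  have hball : IsPreconnected (Metric.closedBall x ‖d‖) := (convex_closedBall x _).isPreconnected
  obtain ⟨y, hy, hyV⟩ := nonempty_inter_cornerLocus_of_isPreconnected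
    (f := fun k y => ⟪a k, y⟫ + c k) hball (fun k _ => by fun_prop) hi hj (ne_of_apply_ne a hij)
    (Metric.mem_closedBall_self (norm_nonneg d)) (by simp) hmax hmeet.le
  exact ⟨y, hyV, hnorm ▸ mem_closedBall_iff_norm.mp hy⟩

theorem stmt_7_general [DecidableEq ι] (hi : i ∈ s) (hne : (s.erase i).Nonempty)
    (hmax : ⟪a i, x⟫ + c i = s.sup' ⟨i, hi⟩ (fun k => ⟪a k, x⟫ + c k))
    {r : ℝ} (hr : 0 < r) (hsep : ∀ k ∈ s.erase i, r ≤ ‖a k - a i‖) :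
    ∃ y ∈ cornerLocus s ⟨i, hi⟩ (fun k y => ⟪a k, y⟫ + c k),
      ‖y - x‖ ≤ (s.sup' ⟨i, hi⟩ (fun k => ⟪a k, x⟫ + c k) -
        (s.erase i).sup' hne (fun k => ⟪a k, x⟫ + c k)) / r := by
  obtain ⟨j, hj, hsup⟩ := Finset.exists_mem_eq_sup' hne (fun k => ⟪a k, x⟫ + c k)
  have hle : ∀ k ∈ s, ⟪a k, x⟫ + c k ≤ ⟪a i, x⟫ + c i := fun k hk =>
    hmax ▸ Finset.le_sup' (fun k => ⟪a k, x⟫ + c k) hk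
  have hjs : j ∈ s := Finset.mem_of_mem_erase hj
  have hij : a j ≠ a i := sub_ne_zero.mp (norm_pos_iff.mp (hr.trans_le (hsep j hj)))
  obtain ⟨y, hyV, hy⟩ := exists_mem_cornerLocus_norm_sub_le_div hi hjs hij hle
  rw [hsup, ← hmax]
  exact ⟨y, hyV, hy.trans
    (div_le_div_of_nonneg_left (sub_nonneg.mpr (hle j hjs)) hr (hsep j hj))⟩

end InnerProductSpace

section EuclideanSpace

variable {ι : Type*} [Fintype ι]

lemma real_inner_toLp_left (v : ι → ℝ) (x : EuclideanSpace ℝ ι) :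
    ⟪WithLp.toLp 2 v, x⟫ = ∑ i, v i * x i := by
  simp only [PiLp.inner_apply, RCLike.inner_apply, conj_trivial, mul_comm]

lemma one_le_norm_toLp_intCast_sub {m n : ι → ℤ} (h : m ≠ n) :
    1 ≤ ‖WithLp.toLp 2 (fun i => (m i : ℝ)) - WithLp.toLp 2 (fun i => (n i : ℝ))‖ := by
  obtain ⟨i, hi⟩ := Function.ne_iff.mp h
  have hcoord : (1 : ℝ) ≤ ‖(m i : ℝ) - n i‖ := by
    rw [Real.norm_eq_abs]
    exact_mod_cast Int.one_le_abs (sub_ne_zero.mpr hi)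
  exact hcoord.trans (PiLp.norm_apply_le
    (WithLp.toLp 2 (fun i => (m i : ℝ)) - WithLp.toLp 2 (fun i => (n i : ℝ))) i)

end EuclideanSpace

/-- Let `F x = max_{m ∈ A}(⟨m,x⟩ + c m)` be a tropical polynomial with at least
two terms and let `V` be its corner locus. If the maximum at `x` is attained by the unique
element `m₀ ∈ A`, then `V` is nonempty and contains a point `y` with
`‖y - x‖ ≤ F x - max_{m ∈ A, m ≠ m₀}(⟨m,x⟩ + c m)` (Euclidean norm). -/
theorem stmt_7 (N : ℕ) (A : Finset (Fin N → ℤ)) (hA : 2 ≤ A.card)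
    (c : (Fin N → ℤ) → ℝ)
    (F : EuclideanSpace ℝ (Fin N) → ℝ)
    (hF : F = fun x => A.sup' (Finset.card_pos.mp (by omega))
      (fun m => ∑ i, (m i : ℝ) * x i + c m))
    (V : Set (EuclideanSpace ℝ (Fin N)))
    (hV : V = {y | ∃ m₁ ∈ A, ∃ m₂ ∈ A, m₁ ≠ m₂ ∧
        ∑ i, (m₁ i : ℝ) * y i + c m₁ = F y ∧ ∑ i, (m₂ i : ℝ) * y i + c m₂ = F y})
    (x : EuclideanSpace ℝ (Fin N)) (m₀ : Fin N → ℤ) (hm₀ : m₀ ∈ A)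
    (hmax : ∑ i, (m₀ i : ℝ) * x i + c m₀ = F x)
    (huniq : ∀ m ∈ A, ∑ i, (m i : ℝ) * x i + c m = F x → m = m₀) :
    V.Nonempty ∧ ∃ y ∈ V, ‖y - x‖ ≤
      F x - (A.erase m₀).sup'
        (by rw [← Finset.card_pos, Finset.card_erase_of_mem hm₀]; omega)
        (fun m => ∑ i, (m i : ℝ) * x i + c m) := by
  subst hF hV
  simp only [← real_inner_toLp_left] at hmax ⊢
  obtain ⟨y, hyV, hy⟩ := stmt_7_general hm₀ _ hmax one_pos fun m hm =>
    one_le_norm_toLp_intCast_sub (Finset.ne_of_mem_erase hm)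
  rw [div_one] at hy
  exact ⟨⟨y, hyV⟩, y, hyV, hy⟩
end

section
/- Let A be a nonempty finite set of vectors in ℝ^N, let c : A → ℝ, and define F : ℝ^N → ℝ by F(x) = max_{m ∈ A}(⟨m, x⟩ + c(m)). Then for every x ∈ ℝ^N, the function F is differentiable at x if and only if there is exactly one m ∈ A with ⟨m, x⟩ + c(m) = F(x). -/
/-!
A differentiable function touching another one from below at `x` has the same derivative there,
so a derivative of a finite maximum at `x` equals that of every piece attaining the maximum.
Conversely, if these pieces share the derivative `L`, the other pieces lie strictly below near `x`,
and the maximum has the first-order expansion given by `L`. For affine pieces with distinct slopes,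
sharing the derivative means that only one piece attains the maximum.
-/

section

open Filter Topology

variable {ι E : Type*} [NormedAddCommGroup E] [NormedSpace ℝ E] {x : E}

theorem hasFDerivAt_eq_of_eventuallyLE {f g : E → ℝ} {f' g' : E →L[ℝ] ℝ}
    (hf : HasFDerivAt f f' x) (hg : HasFDerivAt g g' x) (hle : f ≤ᶠ[𝓝 x] g)
    (heq : f x = g x) : f' = g' := by
  have hmin : IsLocalMin (g - f) x := hle.mono fun y hy => by simpa [heq] using hy
  exact (sub_eq_zero.1 (hmin.hasFDerivAt_eq_zero (hg.sub hf))).symm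

variable {s : Finset ι} {f : ι → E → ℝ} {f' : ι → E →L[ℝ] ℝ} {L : E →L[ℝ] ℝ}

theorem hasFDerivAt_finset_sup'_of_forall_eq (hs : s.Nonempty)
    (hf : ∀ i ∈ s, HasFDerivAt (f i) (f' i) x)
    (hL : ∀ i ∈ s, f i x = s.sup' hs (f · x) → f' i = L) :
    HasFDerivAt (fun y => s.sup' hs (f · y)) L x := by
  set M := s.sup' hs (f · x)
  have expansion : ∀ i ∈ s, f i x = M → ∀ ε > 0, ∀ᶠ y in 𝓝 x,
      |f i y - M - L (y - x)| ≤ ε * ‖y - x‖ := fun i hi hiM ε hε => by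
    simpa only [hL i hi hiM, hiM, Real.norm_eq_abs] using (hf i hi).isLittleO.def hε
  obtain ⟨i, hi, hMi⟩ := s.exists_mem_eq_sup' hs (f · x)
  refine .of_isLittleO <| Asymptotics.isLittleO_iff.2 fun ε hε => ?_
  have upper : ∀ᶠ y in 𝓝 x, ∀ j ∈ s, f j y ≤ M + L (y - x) + ε * ‖y - x‖ := by
    refine (eventually_all_finset s).2 fun j hj => ?_
    rcases (s.le_sup' (f · x) hj).eq_or_lt with hjM | hjM
    · filter_upwards [expansion j hj hjM ε hε] with y hy
      linarith [(abs_le.1 hy).2]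
    · have hbound : ContinuousAt (fun y => M + L (y - x) + ε * ‖y - x‖) x := by fun_prop
      refine ((hf j hj).continuousAt.eventually_lt hbound ?_).mono fun _ => le_of_lt
      simpa using hjM
  filter_upwards [upper, expansion i hi hMi.symm ε hε] with y hupper hlower
  have hle : s.sup' hs (f · y) ≤ M + L (y - x) + ε * ‖y - x‖ := s.sup'_le hs _ hupper
  have hge : f i y ≤ s.sup' hs (f · y) := s.le_sup' (f · y) hi
  rw [Real.norm_eq_abs, abs_le]
  constructor <;> linarith [(abs_le.1 hlower).1]

theorem hasFDerivAt_finset_sup'_iff (hs : s.Nonempty)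
    (hf : ∀ i ∈ s, HasFDerivAt (f i) (f' i) x) :
    HasFDerivAt (fun y => s.sup' hs (f · y)) L x ↔
      ∀ i ∈ s, f i x = s.sup' hs (f · x) → f' i = L :=
  ⟨fun hmax i hi => hasFDerivAt_eq_of_eventuallyLE (hf i hi) hmax
    (.of_forall fun y => s.le_sup' (f · y) hi), hasFDerivAt_finset_sup'_of_forall_eq hs hf⟩

theorem stmt_9_general (hs : s.Nonempty) (hf : ∀ i ∈ s, HasFDerivAt (f i) (f' i) x)
    (hinj : Set.InjOn f' s) :
    DifferentiableAt ℝ (fun y => s.sup' hs (f · y)) x ↔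
      ∃! i, i ∈ s ∧ f i x = s.sup' hs (f · x) := by
  constructor
  · rintro ⟨L, hL⟩
    have hderiv := (hasFDerivAt_finset_sup'_iff hs hf).1 hL
    obtain ⟨i, hi, hmax⟩ := s.exists_mem_eq_sup' hs (f · x)
    exact ⟨i, ⟨hi, hmax.symm⟩, fun j ⟨hj, hjmax⟩ =>
      hinj hj hi ((hderiv j hj hjmax).trans (hderiv i hi hmax.symm).symm)⟩
  · rintro ⟨i, -, huniq⟩
    exact ⟨f' i, (hasFDerivAt_finset_sup'_iff hs hf).2 fun j hj hjmax =>
      congrArg f' (huniq j ⟨hj, hjmax⟩)⟩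

end

/-- The convex piecewise-linear function `F x = max_{m ∈ A}(⟨m,x⟩ + c m)`
given by a tropical polynomial is differentiable at `x` if and only if the maximum is
attained by exactly one `m ∈ A`. -/
theorem stmt_9 (N : ℕ) (A : Finset (Fin N → ℝ)) (hA : A.Nonempty)
    (c : (Fin N → ℝ) → ℝ)
    (F : (Fin N → ℝ) → ℝ)
    (hF : F = fun x => A.sup' hA (fun m => ∑ i, m i * x i + c m)) :
    ∀ x, DifferentiableAt ℝ F x ↔ ∃! m, m ∈ A ∧ ∑ i, m i * x i + c m = F x := by
  subst hF
  let slope := dotProductEquiv ℝ (Fin N) ≪≫ₗ LinearMap.toContinuousLinearMap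
  exact fun x => stmt_9_general hA (fun m _ => (slope m).hasFDerivAt.add_const (c m))
    slope.injective.injOn
end
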